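/- Let f_1 and f_2 be self-usage utility functions with f_1'(x) > f_2'(x) for all x ∈ [0,1), and let p_a, B_a, p_b ≥ 0 with p_b < p_a + B_a < min(f_1'(0), f_2'(0)). For i = 1, 2 let s_{ia}, s_{ib} ∈ (0,1) satisfy f_i'(1−s_{ia}) = p_a + B_a and f_i'(1−s_{ib}) = p_b. Then (p_a + B_a − p_b)·s_{2a} − (f_2(1−s_{2b}) − f_2(1−s_{2a}) − p_b·(s_{2a} − s_{2b})) > (p_a + B_a − p_b)·s_{1a} − (f_1(1−s_{1b}) − f_1(1−s_{1a}) − p_b·(s_{1a} − s_{1b})). Consequently, under a linear loyalty program with bonus B_a, the threshold bound required to attract owner 1 is strictly tighter than that required to attract owner 2, so whenever platform a attracts owner 1 it also attracts owner 2. -/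

import Mathlib

/-- A self-usage utility function `f` with derivative `f'`:
differentiable on `[0,1]`, strictly increasing on `[0,1]`,
strictly concave on `[0,1]` (with `f'` strictly decreasing), and `f' 1 = 0`. -/
def SelfUsage (f f' : ℝ → ℝ) : Prop :=
  (∀ x ∈ Set.Icc (0:ℝ) 1, HasDerivWithinAt f (f' x) (Set.Icc (0:ℝ) 1) x) ∧
  StrictMonoOn f (Set.Icc (0:ℝ) 1) ∧
  StrictConcaveOn ℝ (Set.Icc (0:ℝ) 1) f ∧
  StrictAntiOn f' (Set.Icc (0:ℝ) 1) ∧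
  f' 1 = 0

/-!
For an owner facing pay `p` who keeps a share `x` for self-usage, the payoff is `f x + p * (1 - x)`,
and the threshold bound is the best payoff at `p_a + B_a` minus the best payoff at `p_b`.
To compare the owners, write `x` for owner 1's choice at the high pay and `y` for owner 2's choice
at the low pay, and exchange the two: give owner 2 at the high pay and owner 1 at the low pay the
choices `x` and `y` in the order that increases the total. If `x ≤ y`, each pay level keeps its
choice and the total does not fall because `f₁ - f₂` is increasing; if `y < x`, each owner keeps
their choice and the total rises because the smaller share is kept where the pay is higher.
Optimality of the actual choices then gives the inequality.
-/

open Set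
open scoped Topology

/-- The payoff of an owner with self-usage utility `f` who keeps the share `x` for self-usage and
rents out the rest at pay `p`; the paper's supply level is `s = 1 - x`. -/
def ownerPayoff (f : ℝ → ℝ) (p x : ℝ) : ℝ := f x + p * (1 - x)

/-- The paper's upper bound on `B_a * t_a` under which an owner with self-usage utility `f` joins
platform a. Here `p` is the full pay `p_a + B_a` on platform a, `q` is the pay on platform b, and
`s`, `t` are the owner's supply levels on a and b. -/
def thresholdBound (f : ℝ → ℝ) (p q s t : ℝ) : ℝ :=
  (p - q) * s - (f (1 - t) - f (1 - s) - q * (s - t))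

theorem thresholdBound_eq_ownerPayoff_sub (f : ℝ → ℝ) (p q s t : ℝ) :
    thresholdBound f p q s t = ownerPayoff f p (1 - s) - ownerPayoff f q (1 - t) := by
  unfold thresholdBound ownerPayoff
  ring

section Optimality

variable {D : Set ℝ} {f : ℝ → ℝ} {p q x y : ℝ}

theorem isMaxOn_ownerPayoff (hf : ConcaveOn ℝ D f) (hx : x ∈ D) (hfx : HasDerivWithinAt f p D x) :
    IsMaxOn (ownerPayoff f p) D x := by
  intro y hy
  change f y + p * (1 - y) ≤ f x + p * (1 - x)
  rcases lt_trichotomy x y with hxy | rfl | hyx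
  · have hslope := hf.slope_le_of_hasDerivWithinAt hx hy hxy hfx
    rw [slope_def_field, div_le_iff₀ (sub_pos.2 hxy)] at hslope
    linarith
  · exact le_rfl
  · have hslope := hf.le_slope_of_hasDerivWithinAt hy hx hyx hfx
    rw [slope_def_field, le_div_iff₀ (sub_pos.2 hyx)] at hslope
    linarith

theorem ownerPayoff_lt_of_hasDerivAt_of_ne (hf : ConcaveOn ℝ D f) (hx : x ∈ D)
    (hfx : HasDerivWithinAt f p D x) (hy : D ∈ 𝓝 y) (hfy : HasDerivAt f q y) (hqp : q ≠ p) :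
    ownerPayoff f p y < ownerPayoff f p x := by
  have hmax := isMaxOn_ownerPayoff hf hx hfx
  refine (hmax (mem_of_mem_nhds hy)).lt_of_ne fun heq => hqp ?_
  have hymax : IsMaxOn (ownerPayoff f p) D y := fun z hz => (hmax hz).trans_eq heq.symm
  have hderiv : HasDerivAt (ownerPayoff f p) (q + p * -1) y :=
    hfy.add (((hasDerivAt_id y).const_sub 1).const_mul p)
  linarith [(hymax.isLocalMax hy).hasDerivAt_eq_zero hderiv]

end Optimality

section Comparison

variable {D : Set ℝ} {f g : ℝ → ℝ}

theorem monotoneOn_sub_of_hasDerivWithinAt_le {f' g' : ℝ → ℝ} (hD : Convex ℝ D)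
    (hf : ∀ x ∈ D, HasDerivWithinAt f (f' x) D x) (hg : ∀ x ∈ D, HasDerivWithinAt g (g' x) D x)
    (hle : ∀ x ∈ interior D, g' x ≤ f' x) : MonotoneOn (f - g) D := by
  have hfg : ∀ x ∈ D, HasDerivWithinAt (f - g) (f' x - g' x) D x := fun x hx =>
    (hf x hx).sub (hg x hx)
  exact monotoneOn_of_hasDerivWithinAt_nonneg hD (fun x hx => (hfg x hx).continuousWithinAt)
    (fun x hx => (hfg x (interior_subset hx)).mono interior_subset)
    (fun x hx => sub_nonneg.2 (hle x hx))

theorem ownerPayoff_add_lt_of_monotoneOn_sub {p q x y u v : ℝ} (hfg : MonotoneOn (f - g) D)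
    (hqp : q < p) (hx : x ∈ D) (hy : y ∈ D) (hu : IsMaxOn (ownerPayoff g p) D u)
    (hv : IsMaxOn (ownerPayoff f q) D v) (hxu : ownerPayoff g p x < ownerPayoff g p u) :
    ownerPayoff f p x + ownerPayoff g q y < ownerPayoff g p u + ownerPayoff f q v := by
  rcases le_or_gt x y with hxy | hyx
  · calc
      ownerPayoff f p x + ownerPayoff g q y ≤ ownerPayoff g p x + ownerPayoff f q y := by
        have hsub : f x - g x ≤ f y - g y := hfg hx hy hxy
        unfold ownerPayoff
        linarith
      _ < ownerPayoff g p u + ownerPayoff f q v := add_lt_add_of_lt_of_le hxu (hv hy)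
  · calc
      ownerPayoff f p x + ownerPayoff g q y < ownerPayoff g p y + ownerPayoff f q x := by
        have hprod : 0 < (p - q) * (x - y) := mul_pos (sub_pos.2 hqp) (sub_pos.2 hyx)
        unfold ownerPayoff
        linarith
      _ ≤ ownerPayoff g p u + ownerPayoff f q v := add_le_add (hu hy) (hv hx)

end Comparison

theorem LLP_owner1_threshold_tighter_general {D : Set ℝ} {f1 f1' f2 f2' : ℝ → ℝ}
    (hf1 : ConcaveOn ℝ D f1) (hf2 : ConcaveOn ℝ D f2)
    (hf1' : ∀ x ∈ D, HasDerivWithinAt f1 (f1' x) D x)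
    (hf2' : ∀ x ∈ D, HasDerivWithinAt f2 (f2' x) D x)
    (horder : ∀ x ∈ interior D, f2' x < f1' x) {p q s1a s1b s2a s2b : ℝ} (hqp : q < p)
    (h1a : 1 - s1a ∈ interior D) (h1b : 1 - s1b ∈ D) (h2a : 1 - s2a ∈ D) (h2b : 1 - s2b ∈ D)
    (hd1a : f1' (1 - s1a) = p) (hd1b : f1' (1 - s1b) = q) (hd2a : f2' (1 - s2a) = p) :
    thresholdBound f1 p q s1a s1b < thresholdBound f2 p q s2a s2b := by
  have hderiv1b : HasDerivWithinAt f1 q D (1 - s1b) := hd1b ▸ hf1' _ h1b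
  have hderiv2a : HasDerivWithinAt f2 p D (1 - s2a) := hd2a ▸ hf2' _ h2a
  have hmono : MonotoneOn (f1 - f2) D :=
    monotoneOn_sub_of_hasDerivWithinAt_le hf1.1 hf1' hf2' fun x hx => (horder x hx).le
  have hnhds : D ∈ 𝓝 (1 - s1a) := mem_interior_iff_mem_nhds.1 h1a
  have hstrict : ownerPayoff f2 p (1 - s1a) < ownerPayoff f2 p (1 - s2a) :=
    ownerPayoff_lt_of_hasDerivAt_of_ne hf2 h2a hderiv2a hnhds
      ((hf2' _ (interior_subset h1a)).hasDerivAt hnhds) ((horder _ h1a).trans_eq hd1a).ne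
  rw [thresholdBound_eq_ownerPayoff_sub, thresholdBound_eq_ownerPayoff_sub]
  linarith [ownerPayoff_add_lt_of_monotoneOn_sub hmono hqp (interior_subset h1a) h2b
    (isMaxOn_ownerPayoff hf2 h2a hderiv2a) (isMaxOn_ownerPayoff hf1 h1b hderiv1b) hstrict]

/-- under a linear loyalty program with bonus B_a, the threshold
bound required to attract owner 1 is strictly tighter than for owner 2. -/
theorem LLP_owner1_threshold_tighter
    (f1 f1' f2 f2' : ℝ → ℝ) (hf1 : SelfUsage f1 f1') (hf2 : SelfUsage f2 f2')
    (horder : ∀ x ∈ Set.Ico (0:ℝ) 1, f2' x < f1' x)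
    (pa Ba pb : ℝ) (hpa : 0 ≤ pa) (hBa : 0 ≤ Ba) (hpb : 0 ≤ pb)
    (h1 : pb < pa + Ba) (h2 : pa + Ba < min (f1' 0) (f2' 0))
    (s1a s1b s2a s2b : ℝ)
    (h1a : s1a ∈ Set.Ioo (0:ℝ) 1) (h1b : s1b ∈ Set.Ioo (0:ℝ) 1)
    (h2a : s2a ∈ Set.Ioo (0:ℝ) 1) (h2b : s2b ∈ Set.Ioo (0:ℝ) 1)
    (hd1a : f1' (1 - s1a) = pa + Ba) (hd1b : f1' (1 - s1b) = pb)
    (hd2a : f2' (1 - s2a) = pa + Ba) (hd2b : f2' (1 - s2b) = pb) :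
    (pa + Ba - pb) * s1a - (f1 (1 - s1b) - f1 (1 - s1a) - pb * (s1a - s1b))
      < (pa + Ba - pb) * s2a - (f2 (1 - s2b) - f2 (1 - s2a) - pb * (s2a - s2b)) := by
  obtain ⟨hderiv1, -, hconcave1, -, -⟩ := hf1
  obtain ⟨hderiv2, -, hconcave2, -, -⟩ := hf2
  have hmem : ∀ s ∈ Ioo (0 : ℝ) 1, 1 - s ∈ Icc (0 : ℝ) 1 := fun s hs =>
    Icc.one_sub_mem (Ioo_subset_Icc_self hs)
  exact LLP_owner1_threshold_tighter_general hconcave1.concaveOn hconcave2.concaveOn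
    hderiv1 hderiv2 (fun x hx => horder x (Ioo_subset_Ico_self (interior_Icc.subset hx))) h1
    (interior_Icc.superset (Ioo.one_sub_mem h1a)) (hmem _ h1b) (hmem _ h2a) (hmem _ h2b)
    hd1a hd1b hd2a
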